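/- arXiv:1504.00954 — 2 statements merged into one kernel-verified Lean document; each statement's English description precedes it below -/
import Mathlib

section
/- Let G be a finite simple graph with m edges and let ≺ be the degree-then-label order on vertices. Then for every pair of adjacent vertices v and x, the number of vertices w such that {v, x, w} forms a triangle of G and x ≺ w is at most √(2m); equivalently, (card {w : w adjacent to v, w adjacent to x, x ≺ w})² ≤ 2m. -/
open Finset SimpleGraph

/-- The degree-then-label strict total order on vertices: `u ≺ v` iff
`deg u < deg v`, or `deg u = deg v` and `u < v` in a fixed linear order. -/
abbrev prec {V : Type*} [Fintype V] [LinearOrder V] (G : SimpleGraph V)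
    [DecidableRel G.Adj] (u v : V) : Prop :=
  G.degree u < G.degree v ∨ (G.degree u = G.degree v ∧ u < v)

theorem degree_le_of_prec {V : Type*} [Fintype V] [LinearOrder V] {G : SimpleGraph V}
    [DecidableRel G.Adj] {u v : V} (h : prec G u v) : G.degree u ≤ G.degree v :=
  h.elim le_of_lt fun h => h.1.le

section

variable {V : Type*} [Fintype V] {G : SimpleGraph V} [DecidableRel G.Adj]

theorem card_mul_le_two_mul_card_edgeFinset {s : Finset V} {k : ℕ}
    (hk : ∀ w ∈ s, k ≤ G.degree w) : #s * k ≤ 2 * #G.edgeFinset :=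
  calc #s * k ≤ ∑ w ∈ s, G.degree w := s.card_nsmul_le_sum _ k hk
    _ ≤ ∑ w, G.degree w := sum_le_sum_of_subset s.subset_univ
    _ = 2 * #G.edgeFinset := G.sum_degrees_eq_twice_card_edges

variable (G) in
/-- Each of the counted neighbours contributes at least `deg x`, hence at least their own number, to
the degree sum `2m`. -/
theorem card_assoc_triangles_sq_le_two_mul_edges_general (x : V) :
    #{w ∈ G.neighborFinset x | G.degree x ≤ G.degree w} ^ 2 ≤ 2 * #G.edgeFinset := by
  set s := {w ∈ G.neighborFinset x | G.degree x ≤ G.degree w}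
  have card_le : #s ≤ G.degree x := card_filter_le _ _
  calc #s ^ 2 = #s * #s := sq _
    _ ≤ #s * G.degree x := Nat.mul_le_mul_left _ card_le
    _ ≤ 2 * #G.edgeFinset :=
      card_mul_le_two_mul_card_edgeFinset fun _ hw => (mem_filter.mp hw).2

end

/-- For every pair of adjacent vertices `v` and `x`, the number of vertices `w`
such that `{v, x, w}` is a triangle and `x ≺ w` is at most `√(2m)`, i.e. its
square is at most `2m`. -/
theorem card_assoc_triangles_sq_le_two_mul_edges
    {V : Type*} [Fintype V] [LinearOrder V]
    (G : SimpleGraph V) [DecidableRel G.Adj] (v x : V) (hvx : G.Adj v x) :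
    (Finset.univ.filter (fun w => G.Adj v w ∧ G.Adj x w ∧ prec G x w)).card ^ 2
      ≤ 2 * G.edgeFinset.card := by
  refine (Nat.pow_le_pow_left (card_le_card fun w hw => ?_) 2).trans
    (card_assoc_triangles_sq_le_two_mul_edges_general G x)
  obtain ⟨-, -, hxw, hprec⟩ := mem_filter.mp hw
  exact mem_filter.mpr ⟨(G.mem_neighborFinset x w).mpr hxw, degree_le_of_prec hprec⟩
end

section
/- Let n ≥ 2 and let k ≤ n be an even natural number. Let G be the simple graph on the vertex set Fin n ⊕ Fin n with the following edges: a cross edge between inl i and inr j if and only if ¬(i = j ∧ i < k); a left edge between inl i and inl j if and only if {i, j} = {2a, 2a+1} for some a with 2a+1 < k; and a right edge between inr i and inr j if and only if {i, j} = {2a, 2a+1} for some a with 2a+1 < k. Then every vertex of G has degree exactly n, and the number of triangles of G is exactly k·(n − 2). -/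
open Finset SimpleGraph

open scoped Classical

/-- The underlying relation: a cross edge between `inl i` and `inr j` iff
`¬(i = j ∧ i < k)`; a matching edge within each side pairing index `2a` with
`2a+1` for `2a+1 < k`. -/
def partialMatchingRel (n k : ℕ) : (Fin n ⊕ Fin n) → (Fin n ⊕ Fin n) → Prop
  | Sum.inl i, Sum.inr j => ¬(i = j ∧ i.val < k)
  | Sum.inl i, Sum.inl j => ∃ a : ℕ, i.val = 2 * a ∧ j.val = 2 * a + 1 ∧ 2 * a + 1 < k
  | Sum.inr i, Sum.inr j => ∃ a : ℕ, i.val = 2 * a ∧ j.val = 2 * a + 1 ∧ 2 * a + 1 < k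
  | Sum.inr _, Sum.inl _ => False

/-- The graph obtained from `K_{n,n}` by removing the size-`k` matching
`{(inl i, inr i) : i < k}` and adding, within each side, a matching of size
`k/2` pairing index `2a` with index `2a+1` for `2a+1 < k`. -/
def partialMatchingGraph (n k : ℕ) : SimpleGraph (Fin n ⊕ Fin n) :=
  SimpleGraph.fromRel (partialMatchingRel n k)

/-!
The graph is two copies of one graph `A` (the matching of consecutive indices), fully joined except
that the mirrored pairs over the support of `A` are removed. When `A` is a matching, each vertex of
the support gains one neighbour inside its copy and loses one across, so all degrees agree.

When `A` is triangle-free, two of the three vertices of a triangle lie in the same copy and the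
third in the other, so each triangle contains exactly one edge inside the copies. Such an edge, over
`A.Adj i j`, is completed to a triangle by every vertex of the other copy except the mirrors of `i`
and `j`. Hence there are `2 * |E(A)| * (n - 2)` triangles, and `2 * |E(A)| = k` by the degree sum.
-/

section TriangleCount

variable {V : Type*} [Fintype V] [DecidableEq V] {G M : SimpleGraph V} [DecidableRel G.Adj]

lemma card_filter_cliqueFinset_three_of_adj {u v : V} (huv : G.Adj u v) :
    #{t ∈ G.cliqueFinset 3 | u ∈ t ∧ v ∈ t} = #(G.neighborFinset u ∩ G.neighborFinset v) := by
  symm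
  refine card_bij (fun w _ ↦ {u, v, w}) (fun w hw ↦ ?_) (fun w hw w' hw' h ↦ ?_) (fun t ht ↦ ?_)
  · rw [mem_inter, mem_neighborFinset, mem_neighborFinset] at hw
    simp [mem_cliqueFinset_iff, is3Clique_triple_iff, huv, hw]
  · rw [mem_inter, mem_neighborFinset, mem_neighborFinset] at hw
    have hmem : w ∈ ({u, v, w'} : Finset V) := h ▸ by simp
    simpa [hw.1.ne', hw.2.ne'] using hmem
  · obtain ⟨ht, hut, hvt⟩ := mem_filter.1 ht
    rw [mem_cliqueFinset_iff] at ht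
    have huvt : {u, v} ⊆ t := by simp [insert_subset_iff, hut, hvt]
    obtain ⟨w, hw⟩ : ∃ w, t \ {u, v} = {w} := by
      rw [← card_eq_one, card_sdiff_of_subset huvt, ht.card_eq, card_pair huv.ne]
    obtain rfl : {u, v, w} = t := by
      rw [← sdiff_union_of_subset huvt, hw]; grind
    rw [is3Clique_triple_iff] at ht
    exact ⟨w, by simp [ht], rfl⟩

lemma card_cliqueFinset_three_eq_card_edgeFinset_mul [Fintype M.edgeSet] {m : ℕ} (hMG : M ≤ G)
    (hcommon : ∀ u v, M.Adj u v → #(G.neighborFinset u ∩ G.neighborFinset v) = m)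
    (hunique : ∀ t ∈ G.cliqueFinset 3, ∃! e, e ∈ M.edgeSet ∧ ∀ v ∈ e, v ∈ t) :
    #(G.cliqueFinset 3) = #M.edgeFinset * m := by
  rw [← mul_one #(G.cliqueFinset 3), eq_comm]
  refine card_mul_eq_card_mul (fun (e : Sym2 V) t ↦ ∀ v ∈ e, v ∈ t) (fun e he ↦ ?_) (fun t ht ↦ ?_)
  · induction e with | _ u v
    rw [mem_edgeFinset, mem_edgeSet] at he
    simpa only [bipartiteAbove, Sym2.ball] using
      (card_filter_cliqueFinset_three_of_adj (hMG he)).trans (hcommon u v he)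
  · rw [card_eq_one, singleton_iff_unique_mem]
    simpa only [mem_bipartiteBelow, mem_edgeFinset] using hunique t ht

end TriangleCount

lemma not_adj_of_cliqueFree_three {V : Type*} {G : SimpleGraph V} (hG : G.CliqueFree 3)
    {a b c : V} (hab : G.Adj a b) (hac : G.Adj a c) : ¬G.Adj b c :=
  fun hbc ↦ hG {a, b, c} (is3Clique_triple_iff.2 ⟨hab, hac, hbc⟩)

lemma cliqueFree_three_of_degree_le_one {V : Type*} {G : SimpleGraph V} [G.LocallyFinite]
    (hG : ∀ v, G.degree v ≤ 1) : G.CliqueFree 3 := by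
  intro t ht
  obtain ⟨a, b, c, hab, hac, hbc, -⟩ := is3Clique_iff.1 ht
  have hbc' : b = c := card_le_one.1 (hG a) b (by simpa using hab) c (by simpa using hac)
  exact hbc.ne hbc'

/-- Two copies of `A`, joined by all edges between them except those between the two copies of a
vertex in the support of `A`. The graph of the theorem is the case where `A` is a matching. -/
def mirroredJoin {V : Type*} (A : SimpleGraph V) : SimpleGraph (V ⊕ V) where
  Adj
    | .inl i, .inl j => A.Adj i j
    | .inr i, .inr j => A.Adj i j
    | .inl i, .inr j => i = j → i ∉ A.support
    | .inr i, .inl j => i = j → i ∉ A.support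
  symm.symm
    | .inl _, .inl _ | .inr _, .inr _ => fun h ↦ h.symm
    | .inl _, .inr _ | .inr _, .inl _ => fun h hij ↦ hij ▸ h hij.symm
  loopless.irrefl
    | .inl i | .inr i => A.loopless.irrefl i

namespace mirroredJoin

variable {V : Type*} {A : SimpleGraph V} {i j : V}

@[simp] lemma adj_inl_inl : (mirroredJoin A).Adj (.inl i) (.inl j) ↔ A.Adj i j := Iff.rfl

@[simp] lemma adj_inr_inr : (mirroredJoin A).Adj (.inr i) (.inr j) ↔ A.Adj i j := Iff.rfl

@[simp] lemma adj_inl_inr :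
    (mirroredJoin A).Adj (.inl i) (.inr j) ↔ (i = j → i ∉ A.support) := Iff.rfl

@[simp] lemma adj_inr_inl :
    (mirroredJoin A).Adj (.inr i) (.inl j) ↔ (i = j → i ∉ A.support) := Iff.rfl

lemma sum_le : A ⊕g A ≤ mirroredJoin A := by
  rintro (i | i) (j | j) h <;> simp_all

lemma degree_eq_card [Fintype V] [A.LocallyFinite] (hA : ∀ i, A.degree i ≤ 1) (v : V ⊕ V)
    [Fintype ((mirroredJoin A).neighborSet v)] :
    (mirroredJoin A).degree v = Fintype.card V := by
  have hdegree (i : V) : A.degree i + #{j | i = j → i ∉ A.support} = Fintype.card V := by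
    by_cases hi : i ∈ A.support
    · have hone : A.degree i = 1 := (hA i).antisymm ((A.degree_pos_iff_mem_support i).2 hi)
      have hacross : ({j | i = j → i ∉ A.support} : Finset V) = {i}ᶜ := by
        ext j; simp [hi, eq_comm]
      have hcard : 0 < Fintype.card V := Fintype.card_pos_iff.2 ⟨i⟩
      rw [hone, hacross, card_compl, card_singleton, Nat.add_sub_cancel' hcard]
    · simp [hi, (A.degree_eq_zero_iff_notMem_support i).2 hi]
  rw [← card_neighborFinset_eq_degree]
  rcases v with i | i
  · have hneighbors : (mirroredJoin A).neighborFinset (.inl i) =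
        (A.neighborFinset i).disjSum {j | i = j → i ∉ A.support} := by
      ext (j | j) <;> simp
    rw [hneighbors, card_disjSum, card_neighborFinset_eq_degree, hdegree]
  · have hneighbors : (mirroredJoin A).neighborFinset (.inr i) =
        disjSum {j | i = j → i ∉ A.support} (A.neighborFinset i) := by
      ext (j | j) <;> simp
    rw [hneighbors, card_disjSum, card_neighborFinset_eq_degree, add_comm, hdegree]

lemma exists_sum_adj_of_is3Clique [DecidableEq V] (hA : A.CliqueFree 3) {t : Finset (V ⊕ V)}
    (ht : (mirroredJoin A).IsNClique 3 t) :
    ∃ u v w, t = {u, v, w} ∧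
      (A ⊕g A).Adj u v ∧ ¬(A ⊕g A).Adj u w ∧ ¬(A ⊕g A).Adj v w := by
  obtain ⟨u, v, w, huv, huw, hvw, rfl⟩ := is3Clique_iff.1 ht
  rcases u with u | u <;> rcases v with v | v <;> rcases w with w | w
  · exact absurd hvw (not_adj_of_cliqueFree_three hA huv huw)
  · exact ⟨.inl u, .inl v, .inr w, rfl, huv, by simp, by simp⟩
  · exact ⟨.inl u, .inl w, .inr v, by grind, huw, by simp, by simp⟩
  · exact ⟨.inr v, .inr w, .inl u, by grind, hvw, by simp, by simp⟩
  · exact ⟨.inl v, .inl w, .inr u, by grind, hvw, by simp, by simp⟩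
  · exact ⟨.inr u, .inr w, .inl v, by grind, huw, by simp, by simp⟩
  · exact ⟨.inr u, .inr v, .inl w, rfl, huv, by simp, by simp⟩
  · exact absurd hvw (not_adj_of_cliqueFree_three hA huv huw)

lemma existsUnique_sum_edge_of_is3Clique (hA : A.CliqueFree 3) {t : Finset (V ⊕ V)}
    (ht : (mirroredJoin A).IsNClique 3 t) : ∃! e, e ∈ (A ⊕g A).edgeSet ∧ ∀ v ∈ e, v ∈ t := by
  obtain ⟨u, v, w, rfl, huv, huw, hvw⟩ := exists_sum_adj_of_is3Clique hA ht
  refine ⟨s(u, v), ⟨huv, by simp⟩, fun e ⟨he, het⟩ ↦ ?_⟩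
  induction e with | _ x y
  rw [mem_edgeSet] at he
  simp only [Sym2.ball, mem_insert, mem_singleton] at het
  grind [he.ne, he.symm]

section TriangleCount

variable [Fintype V] [DecidableEq V] [DecidableRel (mirroredJoin A).Adj]

lemma card_inter_neighborFinset_of_sum_adj (hA : A.CliqueFree 3) {u v : V ⊕ V}
    (huv : (A ⊕g A).Adj u v) :
    #((mirroredJoin A).neighborFinset u ∩ (mirroredJoin A).neighborFinset v) =
      Fintype.card V - 2 := by
  have hcard {i j : V} (hij : A.Adj i j) : #({i, j}ᶜ : Finset V) = Fintype.card V - 2 := by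
    rw [card_compl, card_pair hij.ne]
  rcases u with i | i <;> rcases v with j | j
  · rw [sum_adj_inl] at huv
    have hcommon : (mirroredJoin A).neighborFinset (.inl i) ∩
        (mirroredJoin A).neighborFinset (.inl j) = disjSum ∅ {i, j}ᶜ := by
      ext (l | l)
      · simpa using not_adj_of_cliqueFree_three hA huv
      · simp [huv.mem_support_left, huv.mem_support_right, eq_comm]
    rw [hcommon, card_disjSum, card_empty, zero_add, hcard huv]
  · exact absurd huv (not_adj_sum_inl_inr i j)
  · exact absurd huv.symm (not_adj_sum_inl_inr j i)
  · rw [sum_adj_inr] at huv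
    have hcommon : (mirroredJoin A).neighborFinset (.inr i) ∩
        (mirroredJoin A).neighborFinset (.inr j) = disjSum {i, j}ᶜ ∅ := by
      ext (l | l)
      · simp [huv.mem_support_left, huv.mem_support_right, eq_comm]
      · simpa using not_adj_of_cliqueFree_three hA huv
    rw [hcommon, card_disjSum, card_empty, add_zero, hcard huv]

lemma card_cliqueFinset_three [Fintype A.edgeSet] (hA : A.CliqueFree 3) :
    #((mirroredJoin A).cliqueFinset 3) = 2 * #A.edgeFinset * (Fintype.card V - 2) := by
  have hedges : #(A ⊕g A).edgeFinset = 2 * #A.edgeFinset := by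
    rw [edgeFinset_card, Fintype.card_congr edgeSetSumEquiv, Fintype.card_sum, edgeFinset_card,
      two_mul]
  rw [← hedges]
  exact card_cliqueFinset_three_eq_card_edgeFinset_mul sum_le
    (fun _ _ ↦ card_inter_neighborFinset_of_sum_adj hA)
    (fun _ ht ↦ existsUnique_sum_edge_of_is3Clique hA (mem_cliqueFinset_iff.1 ht))

end TriangleCount

end mirroredJoin

/-- The matching of the indices below `k` into consecutive pairs `{2a, 2a + 1}`: two indices form
a pair exactly when their halves, rounded down, agree. -/
def consecutivePairs (n k : ℕ) : SimpleGraph (Fin n) where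
  Adj i j := i ≠ j ∧ i.val / 2 = j.val / 2 ∧ i.val < k ∧ j.val < k
  symm.symm _ _ h := ⟨h.1.symm, h.2.1.symm, h.2.2.2, h.2.2.1⟩
  loopless.irrefl _ h := h.1 rfl

namespace consecutivePairs

variable {n k : ℕ}

lemma adj_iff {i j : Fin n} : (consecutivePairs n k).Adj i j ↔
    i ≠ j ∧ i.val / 2 = j.val / 2 ∧ i.val < k ∧ j.val < k := Iff.rfl

lemma adj_iff_exists {i j : Fin n} :
    (consecutivePairs n k).Adj i j ↔ i ≠ j ∧
      ((∃ a : ℕ, i.val = 2 * a ∧ j.val = 2 * a + 1 ∧ 2 * a + 1 < k) ∨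
        ∃ a : ℕ, j.val = 2 * a ∧ i.val = 2 * a + 1 ∧ 2 * a + 1 < k) := by
  rw [adj_iff]
  refine and_congr_right fun hij ↦ ⟨?_, ?_⟩
  · rintro ⟨hhalf, hi, hj⟩
    have hval : i.val ≠ j.val := Fin.val_ne_of_ne hij
    rcases Nat.mod_two_eq_zero_or_one i.val with heven | hodd
    · exact .inl ⟨i.val / 2, by omega, by omega, by omega⟩
    · exact .inr ⟨i.val / 2, by omega, by omega, by omega⟩
  · rintro (⟨a, hi, hj, ha⟩ | ⟨a, hj, hi, ha⟩) <;> omega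

lemma existsUnique_adj (hk : Even k) (hkn : k ≤ n) {i : Fin n} (hi : i.val < k) :
    ∃! j, (consecutivePairs n k).Adj i j := by
  have hpartner : (if i.val % 2 = 0 then i.val + 1 else i.val - 1) < k := by grind
  refine ⟨⟨_, hpartner.trans_le hkn⟩, ?_, fun j hj ↦ ?_⟩ <;> grind [adj_iff]

lemma degree_eq (hk : Even k) (hkn : k ≤ n) (i : Fin n) :
    (consecutivePairs n k).degree i = if i.val < k then 1 else 0 := by
  split_ifs with hi
  · exact degree_eq_one_iff_existsUnique_adj.2 (existsUnique_adj hk hkn hi)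
  · rw [degree_eq_zero_iff_notMem_support, mem_support]
    rintro ⟨j, -, -, hik, -⟩
    exact hi hik

lemma mem_support_iff (hk : Even k) (hkn : k ≤ n) {i : Fin n} :
    i ∈ (consecutivePairs n k).support ↔ i.val < k := by
  rw [← degree_pos_iff_mem_support, degree_eq hk hkn]
  split_ifs <;> simp [*]

lemma two_mul_card_edgeFinset (hk : Even k) (hkn : k ≤ n) :
    2 * #(consecutivePairs n k).edgeFinset = k := by
  rw [← sum_degrees_eq_twice_card_edges]
  simp only [degree_eq hk hkn, sum_boole, Nat.cast_id, Fin.card_filter_val_lt, min_eq_right hkn]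

end consecutivePairs

lemma partialMatchingGraph_eq_mirroredJoin {n k : ℕ} (hk : Even k) (hkn : k ≤ n) :
    partialMatchingGraph n k = mirroredJoin (consecutivePairs n k) := by
  have hcross (i j : Fin n) : (partialMatchingGraph n k).Adj (.inl i) (.inr j) ↔
      (mirroredJoin (consecutivePairs n k)).Adj (.inl i) (.inr j) := by
    rw [mirroredJoin.adj_inl_inr, consecutivePairs.mem_support_iff hk hkn]
    simp [partialMatchingGraph, partialMatchingRel]
  ext (i | i) (j | j)
  · simp [partialMatchingGraph, partialMatchingRel, consecutivePairs.adj_iff_exists]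
  · exact hcross i j
  · rw [adj_comm, adj_comm (mirroredJoin _)]; exact hcross j i
  · simp [partialMatchingGraph, partialMatchingRel, consecutivePairs.adj_iff_exists]

/-- For `n ≥ 2` and even `k ≤ n`, every vertex of the graph has degree `n` and
the number of triangles is exactly `k · (n − 2)`. -/
theorem partialMatchingGraph_degree_and_triangles
    (n k : ℕ) (hn : 2 ≤ n) (hk : Even k) (hkn : k ≤ n) :
    (∀ v, (partialMatchingGraph n k).degree v = n) ∧
      ((partialMatchingGraph n k).cliqueFinset 3).card = k * (n - 2) := by
  have hdegree (i : Fin n) : (consecutivePairs n k).degree i ≤ 1 := by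
    rw [consecutivePairs.degree_eq hk hkn]; split_ifs <;> simp
  rw [partialMatchingGraph_eq_mirroredJoin hk hkn]
  refine ⟨fun v ↦ (mirroredJoin.degree_eq_card hdegree v).trans (Fintype.card_fin n), ?_⟩
  rw [mirroredJoin.card_cliqueFinset_three (cliqueFree_three_of_degree_le_one hdegree),
    consecutivePairs.two_mul_card_edgeFinset hk hkn, Fintype.card_fin]
end
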